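/- Let Ω ⊂ ℝⁿ be a nonempty open bounded convex set. Then max_{r ∈ [0, R_Ω]} r·|Ω_r| ≤ κ_n·nⁿ·R^{n+1}/(n+1)^{n+1}, where R = (|Ω|/κ_n)^{1/n} is the radius of the ball with the same volume as Ω and κ_n = |B_1|. Equality holds if and only if Ω is a ball. -/

import Mathlib

/-!
Write `|Ω| = |B_R|` and `|Ω_r| = |B_ρ|`. Since `Ω_r + B_r ⊆ Ω`, the Brunn–Minkowski inequality
gives `ρ + r ≤ R`, so that `r |Ω_r| ≤ κ r (R - r)ⁿ` (`radius_add_le`), and the right-hand side is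
maximal at `r = R / (n + 1)` (`mul_pow_le_max`). Comparing directly with balls in this way replaces
both the perimeter estimate of `|Ω_r|` and the isoperimetric inequality.

Equality forces `ρ = R - r`, hence equality in Brunn–Minkowski for the convex set `Ω_r` and the
ball `B_r`. The equality case (`exists_ball_subset`) shows that `Ω_r` contains a ball of radius `ρ`,
so that `Ω` contains a ball of radius `R`, which has the volume of `Ω`; thus `Ω` is that ball.

Brunn–Minkowski for open sets is proved by induction on the dimension through Bonnesen's inequality
(`bonnesen`): in `ℝ × ℝᵈ`, the functions giving the volumes of the sections, normalised by their
suprema, have superlevel sets to which one-dimensional Brunn–Minkowski applies.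

For the equality case, take `X` and `Z = B_ρ` of equal volume with `|X + t Z| = (1 + t)ⁿ |Z|`.
By Bonnesen's inequality and strict convexity, their largest sections in any direction `u` have
equal volume (`supSec_eq_of_equality`). Equality persists for the parts of `X` and `Z` above
parallel hyperplanes `⟪u, x⟫ = φ(b)` and `⟪u, x⟫ = b` that cut off equal volumes (`cut_equality`). Above the
centre, the largest section of such a part of the ball is its base, and comparing thin slabs shows
that `φ` has slope at least one; below the centre, reverse `u`. Comparing first moments, the support
function of `X` in direction `u` is at least `⟪u, z⟫ + ρ`, where `z` is the centroid of `X`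
(`support_ge`). As `u` is arbitrary and `X` is open and convex, `B_ρ(z) ⊆ X` by separation.
-/

open MeasureTheory Metric Set Filter

noncomputable section

/-- The inner parallel set `Ω_r = {x ∈ Ω : dist(x, ∂Ω) > r}`. -/
def innerParallel {n : ℕ} (Ω : Set (EuclideanSpace ℝ (Fin n))) (r : ℝ) :
    Set (EuclideanSpace ℝ (Fin n)) :=
  {x ∈ Ω | r < infDist x (frontier Ω)}

/-- The inradius `R_Ω = sup_{x ∈ Ω} dist(x, ∂Ω)`. -/
def inradius {n : ℕ} (Ω : Set (EuclideanSpace ℝ (Fin n))) : ℝ :=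
  sSup ((fun x => infDist x (frontier Ω)) '' Ω)

/-- The perimeter of a set: the `(n-1)`-dimensional Hausdorff measure of its boundary. -/
def perim {n : ℕ} (A : Set (EuclideanSpace ℝ (Fin n))) : ℝ :=
  (μH[(n : ℝ) - 1] (frontier A)).toReal

section helpers
open scoped Pointwise ENNReal RealInnerProductSpace

/-! ### One-dimensional Brunn–Minkowski -/

/-- One-dimensional Brunn–Minkowski. For compact sets, the translates `K + min L` and `max K + L`
both lie in `K + L` and meet in a single point; inner regularity gives the general case. -/
theorem volume_add_le_real {S T : Set ℝ} (hS : MeasurableSet S) (hT : MeasurableSet T)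
    (hSn : S.Nonempty) (hTn : T.Nonempty) : volume S + volume T ≤ volume (S + T) := by
  have key : ∀ K L : Set ℝ, IsCompact K → IsCompact L → K ⊆ S → L ⊆ T →
      volume K + volume L ≤ volume (S + T) := by
    intro K₀ L₀ hK₀ hL₀ hKS₀ hLT₀
    obtain ⟨s, hs⟩ := hSn
    obtain ⟨t, ht⟩ := hTn
    have hK : IsCompact (insert s K₀) := hK₀.insert s
    have hL : IsCompact (insert t L₀) := hL₀.insert t
    have hKS : insert s K₀ ⊆ S := insert_subset hs hKS₀
    have hLT : insert t L₀ ⊆ T := insert_subset ht hLT₀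
    refine (add_le_add (measure_mono (subset_insert s K₀))
      (measure_mono (subset_insert t L₀))).trans ?_
    obtain ⟨k, hkK, hk⟩ := hK.exists_isGreatest ⟨s, mem_insert _ _⟩
    obtain ⟨l, hlL, hl⟩ := hL.exists_isLeast ⟨t, mem_insert _ _⟩
    generalize insert s K₀ = K at *
    generalize insert t L₀ = L at *
    have h1 : volume ((fun x => x + l) '' K) = volume K := by
      rw [image_add_right, measure_preimage_add_right]
    have h2 : volume ((fun x => k + x) '' L) = volume L := by
      rw [image_add_left, measure_preimage_add]
    have hmK : MeasurableSet ((fun x => x + l) '' K) :=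
      (hK.image (by fun_prop)).measurableSet
    have hd : AEDisjoint volume ((fun x => x + l) '' K) ((fun x => k + x) '' L) := by
      refine measure_mono_null (t := {k + l}) ?_ (by simp)
      rintro x ⟨⟨a, ha, rfl⟩, ⟨b, hb, h⟩⟩
      have := hk ha
      have := hl hb
      simp only [mem_singleton_iff] at *
      linarith
    rw [← h1, ← h2, ← measure_union₀' hmK.nullMeasurableSet hd]
    refine measure_mono (union_subset ?_ ?_)
    · rintro _ ⟨a, ha, rfl⟩
      exact add_mem_add (hKS ha) (hLT hlL)
    · rintro _ ⟨a, ha, rfl⟩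
      exact add_mem_add (hKS hkK) (hLT ha)
  rw [hS.measure_eq_iSup_isCompact, hT.measure_eq_iSup_isCompact]
  simp_rw [iSup_and']
  refine ENNReal.biSup_add_biSup_le' (p := fun K => K ⊆ S ∧ IsCompact K)
    (q := fun K => K ⊆ T ∧ IsCompact K)
    ⟨∅, empty_subset _, isCompact_empty⟩ ⟨∅, empty_subset _, isCompact_empty⟩ ?_
  intro K hK L hL
  exact key K L hK.2 hL.2 hK.1 hL.1

/-! ### Sections and Bonnesen's inequality -/

/-- Euclidean space `ℝᵈ`. -/
abbrev Euc (d : ℕ) := EuclideanSpace ℝ (Fin d)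

/-- The Brunn–Minkowski inequality for bounded open sets of `ℝᵈ`, in a form without roots: if
`|X| ≥ aᵈ` and `|Y| ≥ bᵈ`, then `|X + Y| ≥ (a + b)ᵈ`. -/
def BrunnMinkowski (d : ℕ) : Prop :=
  ∀ X Y : Set (Euc d), IsOpen X → IsOpen Y → Bornology.IsBounded X → Bornology.IsBounded Y →
    ∀ a b : ℝ, 0 < a → 0 < b → ENNReal.ofReal (a ^ d) ≤ volume X →
      ENNReal.ofReal (b ^ d) ≤ volume Y → ENNReal.ofReal ((a + b) ^ d) ≤ volume (X + Y)

/-- The volume of the section of `A ⊆ ℝ × ℝᵈ` above `s`. -/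
def sec {d : ℕ} (A : Set (ℝ × Euc d)) (s : ℝ) : ℝ≥0∞ := volume (Prod.mk s ⁻¹' A : Set (Euc d))

/-- The largest volume of a section of `A`. It need not be attained. -/
def supSec {d : ℕ} (A : Set (ℝ × Euc d)) : ℝ≥0∞ := ⨆ s, sec A s

section sections
variable {d : ℕ} {A X Y : Set (ℝ × Euc d)}

lemma measurable_sec (hA : IsOpen A) : Measurable (sec A) :=
  measurable_measure_prodMk_left hA.measurableSet

lemma volume_eq_lintegral_sec (hA : IsOpen A) : volume A = ∫⁻ s, sec A s := by
  rw [Measure.volume_eq_prod, Measure.prod_apply hA.measurableSet]; rfl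

lemma supSec_lt_top (hA : Bornology.IsBounded A) : supSec A < ∞ := by
  have hb : Bornology.IsBounded (Prod.snd '' A) := hA.image_snd
  refine lt_of_le_of_lt (iSup_le fun s => ?_) (hb.measure_lt_top (μ := volume))
  refine measure_mono ?_
  intro v hv
  exact ⟨(s, v), hv, rfl⟩

lemma sec_le_supSec (s : ℝ) : sec A s ≤ supSec A := le_iSup (sec A) s

lemma sec_lt_top (hA : Bornology.IsBounded A) (s : ℝ) : sec A s < ∞ :=
  (sec_le_supSec s).trans_lt (supSec_lt_top hA)

lemma supSec_pos (hA : IsOpen A) (hne : A.Nonempty) : 0 < supSec A := by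
  obtain ⟨⟨s, v⟩, h⟩ := hne
  refine lt_of_lt_of_le ?_ (sec_le_supSec s)
  exact (hA.preimage (by fun_prop)).measure_pos _ ⟨v, h⟩

lemma exists_supSec_eq (hd : d ≠ 0) (hA : IsOpen A) (hb : Bornology.IsBounded A)
    (hne : A.Nonempty) : ∃ α : ℝ, 0 < α ∧ supSec A = ENNReal.ofReal (α ^ d) := by
  have h1 : 0 < (supSec A).toReal :=
    ENNReal.toReal_pos (supSec_pos hA hne).ne' (supSec_lt_top hb).ne
  refine ⟨(supSec A).toReal ^ ((d : ℝ)⁻¹), by positivity, ?_⟩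
  rw [Real.rpow_inv_natCast_pow h1.le hd, ENNReal.ofReal_toReal (supSec_lt_top hb).ne]

/-- Layer-cake formula for the section function, with heights measured in units of `m`. -/
lemma volume_eq_layer (hA : IsOpen A) (hb : Bornology.IsBounded A) {m : ℝ} (hm : 0 < m) :
    volume A = ENNReal.ofReal m *
      ∫⁻ t in Ioi (0 : ℝ), volume {s | ENNReal.ofReal (t * m) ≤ sec A s} := by
  have hmeas := measurable_sec hA
  have h := lintegral_eq_lintegral_meas_le (volume : Measure ℝ)
    (f := fun s => (sec A s).toReal / m) (Eventually.of_forall fun s => by positivity)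
    (by fun_prop)
  have hs : ∀ t > 0, {s | t ≤ (sec A s).toReal / m} = {s | ENNReal.ofReal (t * m) ≤ sec A s} := by
    intro t ht
    ext s
    simp only [mem_ofPred_eq]
    rw [le_div_iff₀ hm, ENNReal.ofReal_le_iff_le_toReal (sec_lt_top hb s).ne]
  rw [volume_eq_lintegral_sec hA, ← setLIntegral_congr_fun (f := fun t =>
    volume {s | t ≤ (sec A s).toReal / m}) measurableSet_Ioi
    (fun t ht => by simp only [hs t ht]), ← h, ← lintegral_const_mul' _ _ (by simp)]
  refine lintegral_congr fun s => ?_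
  rw [← ENNReal.ofReal_mul hm.le, mul_div_cancel₀ _ hm.ne',
    ENNReal.ofReal_toReal (sec_lt_top hb s).ne]

/-- After normalising heights by the maximal section volumes, the superlevel sets of the section
functions satisfy one-dimensional Brunn–Minkowski: both are nonempty for `t < 1` and empty for
`t > 1`, and sums of sections are contained in sections of `X + Y`. -/
lemma layer_add_le (hd : d ≠ 0) (hBM : BrunnMinkowski d) (hX : IsOpen X) (hY : IsOpen Y)
    (hXb : Bornology.IsBounded X) (hYb : Bornology.IsBounded Y) {α β : ℝ} (hα : 0 < α)
    (hβ : 0 < β) (hαX : supSec X = ENNReal.ofReal (α ^ d))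
    (hβY : supSec Y = ENNReal.ofReal (β ^ d)) {t : ℝ} (ht : 0 < t) (ht1 : t ≠ 1) :
    volume {s | ENNReal.ofReal (t * α ^ d) ≤ sec X s} +
      volume {s | ENNReal.ofReal (t * β ^ d) ≤ sec Y s} ≤
    volume {s | ENNReal.ofReal (t * (α + β) ^ d) ≤ sec (X + Y) s} := by
  rcases lt_or_gt_of_ne ht1 with ht1 | ht1
  · have hne : ∀ (A : Set (ℝ × Euc d)) (γ : ℝ), 0 < γ → supSec A = ENNReal.ofReal (γ ^ d) →
        {s | ENNReal.ofReal (t * γ ^ d) ≤ sec A s}.Nonempty := by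
      intro A γ hγ hA
      have : ENNReal.ofReal (t * γ ^ d) < supSec A := by
        rw [hA]
        have := pow_pos hγ d
        exact (ENNReal.ofReal_lt_ofReal_iff this).2 (by nlinarith)
      obtain ⟨s, hs⟩ := lt_iSup_iff.1 this
      exact ⟨s, hs.le⟩
    refine (volume_add_le_real (measurableSet_le measurable_const (measurable_sec hX))
      (measurableSet_le measurable_const (measurable_sec hY))
      (hne X α hα hαX) (hne Y β hβ hβY)).trans (measure_mono ?_)
    rintro _ ⟨s, hs, s', hs', rfl⟩
    simp only [mem_ofPred_eq] at hs hs' ⊢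
    set c : ℝ := t ^ ((d : ℝ)⁻¹) with hc
    have hc0 : 0 < c := by positivity
    have hcd : c ^ d = t := Real.rpow_inv_natCast_pow ht.le hd
    have hXs : Bornology.IsBounded (Prod.mk s ⁻¹' X) :=
      hXb.image_snd.subset fun v hv => ⟨(s, v), hv, rfl⟩
    have hYs : Bornology.IsBounded (Prod.mk s' ⁻¹' Y) :=
      hYb.image_snd.subset fun v hv => ⟨(s', v), hv, rfl⟩
    have h := hBM (Prod.mk s ⁻¹' X) (Prod.mk s' ⁻¹' Y) (hX.preimage (by fun_prop))
      (hY.preimage (by fun_prop)) hXs hYs (c * α) (c * β) (by positivity) (by positivity)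
      (by rw [mul_pow, hcd]; exact hs) (by rw [mul_pow, hcd]; exact hs')
    rw [← mul_add, mul_pow, hcd] at h
    refine h.trans (measure_mono ?_)
    rintro _ ⟨v, hv, w, hw, rfl⟩
    exact ⟨(s, v), hv, (s', w), hw, rfl⟩
  · have hemp : ∀ (A : Set (ℝ × Euc d)) (γ : ℝ), 0 < γ → supSec A = ENNReal.ofReal (γ ^ d) →
        {s | ENNReal.ofReal (t * γ ^ d) ≤ sec A s} = ∅ := by
      intro A γ hγ hA
      rw [eq_empty_iff_forall_notMem]
      intro s hs
      have h2 := (show ENNReal.ofReal (t * γ ^ d) ≤ sec A s from hs).trans (sec_le_supSec s)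
      rw [hA, ENNReal.ofReal_le_ofReal_iff (by positivity)] at h2
      have := pow_pos hγ d
      nlinarith
    rw [hemp X α hα hαX, hemp Y β hβ hβY]
    simp

/-- Bonnesen's inequality, a strengthening of Brunn–Minkowski that involves the maximal section
volumes `αᵈ` and `βᵈ` of the two sets. -/
theorem bonnesen (hd : d ≠ 0) (hBM : BrunnMinkowski d) (hX : IsOpen X) (hY : IsOpen Y)
    (hXb : Bornology.IsBounded X) (hYb : Bornology.IsBounded Y) {α β : ℝ} (hα : 0 < α)
    (hβ : 0 < β) (hαX : supSec X = ENNReal.ofReal (α ^ d))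
    (hβY : supSec Y = ENNReal.ofReal (β ^ d)) :
    (α + β) ^ d * (volume.real X / α ^ d + volume.real Y / β ^ d) ≤ volume.real (X + Y) := by
  have hXYb : Bornology.IsBounded (X + Y) := hXb.add hYb
  have hαd : 0 < α ^ d := by positivity
  have hβd : 0 < β ^ d := by positivity
  have hαβd : 0 < (α + β) ^ d := by positivity
  have eX := volume_eq_layer hX hXb hαd
  have eY := volume_eq_layer hY hYb hβd
  have eXY := volume_eq_layer (hX.add_right (s := X) (t := Y)) hXYb hαβd
  have hle : (∫⁻ t in Ioi (0 : ℝ), volume {s | ENNReal.ofReal (t * α ^ d) ≤ sec X s}) +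
      (∫⁻ t in Ioi (0 : ℝ), volume {s | ENNReal.ofReal (t * β ^ d) ≤ sec Y s}) ≤
      ∫⁻ t in Ioi (0 : ℝ), volume {s | ENNReal.ofReal (t * (α + β) ^ d) ≤ sec (X + Y) s} := by
    refine (le_lintegral_add _ _).trans (lintegral_mono_ae ?_)
    have h1 : ∀ᵐ t ∂(volume.restrict (Ioi (0 : ℝ))), t ≠ 1 :=
      ae_restrict_of_ae (Measure.ae_ne volume 1)
    filter_upwards [h1, ae_restrict_mem measurableSet_Ioi] with t ht1 ht
    exact layer_add_le hd hBM hX hY hXb hYb hα hβ hαX hβY ht ht1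
  generalize (∫⁻ t in Ioi (0 : ℝ), volume {s | ENNReal.ofReal (t * α ^ d) ≤ sec X s}) = x at *
  generalize (∫⁻ t in Ioi (0 : ℝ), volume {s | ENNReal.ofReal (t * β ^ d) ≤ sec Y s}) = y at *
  have h := mul_le_mul_right hle (ENNReal.ofReal ((α + β) ^ d))
  rw [← eXY] at h
  have hres := ENNReal.toReal_mono hXYb.measure_lt_top.ne h
  have fin : ∀ (A : Set (ℝ × Euc d)) (m : ℝ) (z : ℝ≥0∞), 0 < m → Bornology.IsBounded A →
      volume A = ENNReal.ofReal m * z → z ≠ ∞ ∧ z.toReal = volume.real A / m := by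
    intro A m z hm hA e
    have hz : z ≠ ∞ := by
      rintro rfl
      rw [ENNReal.mul_top (by simpa using hm)] at e
      exact hA.measure_lt_top.ne e
    refine ⟨hz, ?_⟩
    rw [measureReal_def, e, ENNReal.toReal_mul, ENNReal.toReal_ofReal hm.le,
      mul_div_cancel_left₀ _ hm.ne']
  obtain ⟨hx, hx'⟩ := fin X _ x hαd hXb eX
  obtain ⟨hy, hy'⟩ := fin Y _ y hβd hYb eY
  rw [ENNReal.toReal_mul, ENNReal.toReal_ofReal hαβd.le, ENNReal.toReal_add hx hy, hx', hy'] at hres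
  exact hres

/-- Convexity of `x ↦ xⁿ⁺¹` at `a / α` and `b / β` with weights proportional to `α` and `β`: the
lower bound of Bonnesen's inequality is at least the one of Brunn–Minkowski. -/
lemma pow_jensen {n : ℕ} {α β a b : ℝ} (hα : 0 < α) (hβ : 0 < β) (ha : 0 < a) (hb : 0 < b) :
    (a + b) ^ (n + 1) ≤ (α + β) ^ n * (a ^ (n + 1) / α ^ n + b ^ (n + 1) / β ^ n) := by
  have h := (convexOn_pow (𝕜 := ℝ) (n + 1)).2 (show a / α ∈ Ici 0 from by simp; positivity)
    (show b / β ∈ Ici 0 from by simp; positivity) (show 0 ≤ α / (α + β) by positivity)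
    (show 0 ≤ β / (α + β) by positivity) (by field_simp)
  simp only [smul_eq_mul] at h
  have e1 : α / (α + β) * (a / α) + β / (α + β) * (b / β) = (a + b) / (α + β) := by field_simp
  rw [e1, div_pow, div_le_iff₀ (by positivity)] at h
  refine h.trans (le_of_eq ?_)
  simp only [div_pow, pow_succ]
  field_simp

/-- Strict convexity: for sets of equal volume the two lower bounds agree only when the maximal
sections do. -/
lemma pow_jensen_eq {n : ℕ} (hn : n ≠ 0) {α β t : ℝ} (hα : 0 < α) (hβ : 0 < β) (ht : 0 < t)
    (h : (α + t * β) ^ n * (1 / α ^ n + t / β ^ n) ≤ (1 + t) ^ (n + 1)) : α = β := by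
  by_contra hne
  have hs := (strictConvexOn_pow (n := n + 1) (by omega)).2
    (show 1 / α ∈ Ici 0 from by simp; positivity) (show 1 / β ∈ Ici 0 from by simp; positivity)
    (by simpa using hne) (show 0 < α / (α + t * β) by positivity)
    (show 0 < t * β / (α + t * β) by positivity) (by field_simp)
  simp only [smul_eq_mul] at hs
  have e1 : α / (α + t * β) * (1 / α) + t * β / (α + t * β) * (1 / β) = (1 + t) / (α + t * β) := by
    field_simp
  rw [e1, div_pow, div_lt_iff₀ (by positivity)] at hs
  refine absurd h (not_le.2 (hs.trans_le (le_of_eq ?_)))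
  simp only [div_pow, pow_succ, one_pow]
  field_simp

end sections

/-! ### The Brunn–Minkowski inequality -/

/-- Orthonormal coordinates whose first coordinate is `⟪u, ·⟫`. -/
theorem exists_split {d : ℕ} (u : Euc (d + 1)) (hu : ‖u‖ = 1) :
    ∃ Φ : Euc (d + 1) ≃L[ℝ] ℝ × Euc d, MeasurePreserving Φ ∧ (∀ x, (Φ x).1 = ⟪u, x⟫) ∧
      ∀ x, ‖x‖ ^ 2 = (Φ x).1 ^ 2 + ‖(Φ x).2‖ ^ 2 := by
  obtain ⟨b, hb⟩ := Orthonormal.exists_orthonormalBasis_extension_of_card_eq (𝕜 := ℝ)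
    (E := Euc (d + 1)) (ι := Fin (d + 1)) (by simp) (v := fun _ => u) (s := {0})
    (by
      rw [orthonormal_iff_ite]
      rintro ⟨i, rfl⟩ ⟨j, rfl⟩
      simp [hu])
  have hb0 : b 0 = u := hb 0 rfl
  let L : Euc (d + 1) ≃ₗ[ℝ] ℝ × Euc d :=
    { toFun := fun x => (b.repr x 0, WithLp.toLp 2 fun i => b.repr x i.succ)
      invFun := fun p => b.repr.symm (WithLp.toLp 2 (Fin.cons p.1 fun i => p.2 i))
      map_add' := fun x y => by
        ext <;> simp
      map_smul' := fun c x => by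
        ext <;> simp
      left_inv := fun x => by
        rw [LinearIsometryEquiv.symm_apply_eq]
        ext i
        refine Fin.cases ?_ (fun j => ?_) i <;> simp
      right_inv := fun p => by
        ext <;> simp }
  refine ⟨L.toContinuousLinearEquiv, ?_, fun x => ?_, fun x => ?_⟩
  · have h1 : MeasurePreserving b.repr := b.repr.measurePreserving
    have h2 := PiLp.volume_preserving_ofLp (Fin (d + 1))
    have h3 := volume_preserving_piFinSuccAbove (fun _ : Fin (d + 1) => ℝ) 0
    have h4 := (MeasurePreserving.id (volume : Measure ℝ)).prod
      (PiLp.volume_preserving_toLp (Fin d))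
    exact h4.comp (h3.comp (h2.comp h1))
  · show b.repr x 0 = _
    rw [b.repr_apply_apply, hb0]
  · rw [← b.repr.norm_map x, EuclideanSpace.real_norm_sq_eq, Fin.sum_univ_succ,
      EuclideanSpace.real_norm_sq_eq]
    rfl

theorem brunnMinkowski_one : BrunnMinkowski 1 := by
  intro X Y hX hY hXb hYb a b ha hb hXa hYb'
  let e : ℝ ≃ₗᵢ[ℝ] Euc 1 := (OrthonormalBasis.singleton (Fin 1) ℝ).repr
  have he : MeasurePreserving e := e.measurePreserving
  have hv : ∀ A : Set (Euc 1), volume (e ⁻¹' A) = volume A := fun A =>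
    he.measure_preimage_equiv (f := e.toMeasurableEquiv) A
  have hne : ∀ (A : Set (Euc 1)) (c : ℝ), 0 < c → ENNReal.ofReal (c ^ 1) ≤ volume A →
      (e ⁻¹' A).Nonempty := by
    intro A c hc h
    apply nonempty_of_measure_ne_zero (μ := volume)
    rw [hv]
    refine (lt_of_lt_of_le ?_ h).ne'
    simpa using hc
  have h := volume_add_le_real (hX.preimage e.continuous).measurableSet
    (hY.preimage e.continuous).measurableSet (hne X a ha hXa) (hne Y b hb hYb')
  rw [pow_one, ENNReal.ofReal_add ha.le hb.le]
  rw [pow_one] at hXa hYb'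
  refine (add_le_add hXa hYb').trans ?_
  rw [← hv X, ← hv Y]
  refine h.trans ?_
  rw [← hv (X + Y)]
  refine measure_mono ?_
  rintro _ ⟨x, hx, y, hy, rfl⟩
  exact ⟨e x, hx, e y, hy, (map_add e x y).symm⟩

section transfer
variable {d : ℕ} {Φ : Euc (d + 1) ≃L[ℝ] ℝ × Euc d}

lemma volume_image_split (hΦ : MeasurePreserving Φ) (A : Set (Euc (d + 1))) :
    volume (Φ '' A) = volume A := by
  have := hΦ.measure_preimage_equiv (f := Φ.toHomeomorph.toMeasurableEquiv) (Φ '' A)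
  rw [← this]
  exact congrArg volume (preimage_image_eq A Φ.injective)

lemma isOpen_image_split {A : Set (Euc (d + 1))} (hA : IsOpen A) : IsOpen (Φ '' A) :=
  Φ.toHomeomorph.isOpenMap A hA

lemma isBounded_image_split {A : Set (Euc (d + 1))} (hA : Bornology.IsBounded A) :
    Bornology.IsBounded (Φ '' A) :=
  (Φ : Euc (d + 1) →L[ℝ] ℝ × Euc d).lipschitz.isBounded_image hA

end transfer

theorem brunnMinkowski_succ {d : ℕ} (hd : d ≠ 0) (h : BrunnMinkowski d) :
    BrunnMinkowski (d + 1) := by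
  intro X Y hX hY hXb hYb a b ha hb hXa hYb'
  obtain ⟨Φ, hΦ, -, -⟩ := exists_split (d := d) (EuclideanSpace.single 0 1) (by simp)
  have hne : ∀ (A : Set (Euc (d + 1))) (c : ℝ), 0 < c →
      ENNReal.ofReal (c ^ (d + 1)) ≤ volume A → (Φ '' A).Nonempty := by
    intro A c hc h
    refine Nonempty.image _ (nonempty_of_measure_ne_zero (μ := volume) ?_)
    refine (lt_of_lt_of_le ?_ h).ne'
    simpa using pow_pos hc (d + 1)
  obtain ⟨α, hα, hαX⟩ := exists_supSec_eq hd (isOpen_image_split hX)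
    (isBounded_image_split hXb) (hne X a ha hXa)
  obtain ⟨β, hβ, hβY⟩ := exists_supSec_eq hd (isOpen_image_split hY)
    (isBounded_image_split hYb) (hne Y b hb hYb')
  have hB := bonnesen hd h (isOpen_image_split hX) (isOpen_image_split hY)
    (isBounded_image_split hXb) (isBounded_image_split hYb) hα hβ hαX hβY
  rw [← image_add, measureReal_def, measureReal_def, measureReal_def, volume_image_split hΦ,
    volume_image_split hΦ, volume_image_split hΦ] at hB
  rw [ENNReal.ofReal_le_iff_le_toReal (hXb.add hYb).measure_lt_top.ne]
  rw [ENNReal.ofReal_le_iff_le_toReal hXb.measure_lt_top.ne] at hXa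
  rw [ENNReal.ofReal_le_iff_le_toReal hYb.measure_lt_top.ne] at hYb'
  refine (pow_jensen hα hβ ha hb).trans (le_trans ?_ hB)
  gcongr

theorem brunnMinkowski {d : ℕ} (hd : d ≠ 0) : BrunnMinkowski d := by
  induction d with
  | zero => exact absurd rfl hd
  | succ d ih =>
    rcases eq_or_ne d 0 with rfl | h
    · exact brunnMinkowski_one
    · exact brunnMinkowski_succ h (ih h)

/-! ### Cutting the equality case by hyperplanes -/

lemma volume_smul {d : ℕ} {t : ℝ} (ht : 0 < t) (A : Set (Euc d)) :
    volume (t • A) = ENNReal.ofReal (t ^ d) * volume A := by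
  rw [Measure.addHaar_smul, abs_of_pos (by positivity), finrank_euclideanSpace_fin]

/-- Brunn–Minkowski for `X` and `t • Z` when `X` and `Z` have equal volume. -/
theorem brunnMinkowski_equal {d : ℕ} (hd : d ≠ 0) {X Z : Set (Euc d)} (hX : IsOpen X)
    (hZ : IsOpen Z) (hXb : Bornology.IsBounded X) (hZb : Bornology.IsBounded Z)
    (hXZ : volume.real X = volume.real Z) {t : ℝ} (ht : 0 < t) :
    (1 + t) ^ d * volume.real Z ≤ volume.real (X + t • Z) := by
  rcases (measureReal_nonneg (μ := volume) (s := Z)).eq_or_lt with h0 | hpos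
  · rw [← h0, mul_zero]; exact measureReal_nonneg
  have htb : Bornology.IsBounded (t • Z) := hZb.smul₀ t
  set w : ℝ := (volume.real Z) ^ ((d : ℝ)⁻¹) with hw
  have hw0 : 0 < w := by positivity
  have hwd : w ^ d = volume.real Z := Real.rpow_inv_natCast_pow hpos.le hd
  have h := brunnMinkowski hd X (t • Z) hX (hZ.smul₀ ht.ne') hXb htb w (t * w) hw0 (by positivity)
    (by rw [hwd, ← hXZ, measureReal_def, ENNReal.ofReal_toReal hXb.measure_lt_top.ne])
    (by
      rw [mul_pow, hwd, volume_smul ht, ENNReal.ofReal_mul (by positivity), measureReal_def,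
        ENNReal.ofReal_toReal hZb.measure_lt_top.ne])
  rw [ENNReal.ofReal_le_iff_le_toReal (hXb.add htb).measure_lt_top.ne] at h
  calc (1 + t) ^ d * volume.real Z = (w + t * w) ^ d := by
        rw [← hwd, ← mul_pow]; ring
    _ ≤ _ := h

lemma supSec_smul {d : ℕ} {t : ℝ} (ht : 0 < t) (A : Set (ℝ × Euc d)) :
    supSec (t • A) = ENNReal.ofReal (t ^ d) * supSec A := by
  unfold supSec
  rw [ENNReal.mul_iSup]
  symm
  refine (Equiv.mulLeft₀ t ht.ne').iSup_congr fun s => ?_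
  show sec (t • A) (t * s) = _
  unfold sec
  rw [← volume_smul ht]
  congr 1
  ext v
  rw [mem_preimage, mem_smul_set_iff_inv_smul_mem₀ ht.ne', mem_smul_set_iff_inv_smul_mem₀ ht.ne',
    mem_preimage, Prod.smul_mk, smul_eq_mul, inv_mul_cancel_left₀ ht.ne']

section cuts
variable {d : ℕ} {Φ : Euc (d + 1) ≃L[ℝ] ℝ × Euc d} {u : Euc (d + 1)} {A X Z : Set (Euc (d + 1))}

/-- If equality holds in Brunn–Minkowski for sets of equal volume `X` and `t • Z`, then `X` and
`Z` have the same maximal section volume in every direction. -/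
theorem supSec_eq_of_equality (hd : d ≠ 0) (hΦ : MeasurePreserving Φ) (hX : IsOpen X)
    (hZ : IsOpen Z) (hXb : Bornology.IsBounded X) (hZb : Bornology.IsBounded Z)
    (hXZ : volume.real X = volume.real Z) (hpos : 0 < volume.real Z) {t : ℝ} (ht : 0 < t)
    (h : volume.real (X + t • Z) ≤ (1 + t) ^ (d + 1) * volume.real Z) :
    supSec (Φ '' X) = supSec (Φ '' Z) := by
  have hXn : (Φ '' X).Nonempty := (nonempty_of_measureReal_ne_zero (hXZ ▸ hpos).ne').image _
  have hZn : (Φ '' Z).Nonempty := (nonempty_of_measureReal_ne_zero hpos.ne').image _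
  obtain ⟨α, hα, hαX⟩ := exists_supSec_eq hd (isOpen_image_split hX)
    (isBounded_image_split hXb) hXn
  obtain ⟨β, hβ, hβZ⟩ := exists_supSec_eq hd (isOpen_image_split hZ)
    (isBounded_image_split hZb) hZn
  have himg : Φ '' (t • Z) = t • (Φ '' Z) := image_smul_comm Φ t Z (fun b => map_smul Φ t b)
  have hβt : supSec (Φ '' (t • Z)) = ENNReal.ofReal ((t * β) ^ d) := by
    rw [himg, supSec_smul ht, hβZ, ← ENNReal.ofReal_mul (by positivity), mul_pow]
  have hB := bonnesen hd (brunnMinkowski hd) (isOpen_image_split hX)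
    (isOpen_image_split (Φ := Φ) (hZ.smul₀ ht.ne')) (isBounded_image_split hXb)
    (isBounded_image_split (hZb.smul₀ t)) hα (show 0 < t * β by positivity) hαX hβt
  rw [← image_add] at hB
  simp only [measureReal_def, volume_image_split hΦ, volume_smul ht] at hB
  simp only [measureReal_def] at h hXZ hpos
  rw [ENNReal.toReal_mul, ENNReal.toReal_ofReal (by positivity), hXZ] at hB
  have h2 := hB.trans h
  have : α = β := by
    refine pow_jensen_eq hd hα hβ ht (le_of_mul_le_mul_right (le_trans (le_of_eq ?_) h2) hpos)
    rw [mul_pow, pow_succ]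
    field_simp
  rw [hαX, hβZ, this]

/-- The part of `A` in the open half-space `{x | a < ⟪u, x⟫}`. -/
def upper (A : Set (Euc (d + 1))) (u : Euc (d + 1)) (a : ℝ) : Set (Euc (d + 1)) :=
  A ∩ {x | a < ⟪u, x⟫}

/-- The volume of the part of `A` in the open half-space `{x | a < ⟪u, x⟫}`. -/
def tail (A : Set (Euc (d + 1))) (u : Euc (d + 1)) (a : ℝ) : ℝ := volume.real (upper A u a)

lemma isOpen_upper (hA : IsOpen A) (a : ℝ) : IsOpen (upper A u a) :=
  hA.inter (isOpen_lt continuous_const (by fun_prop))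

lemma isBounded_upper (hA : Bornology.IsBounded A) (a : ℝ) : Bornology.IsBounded (upper A u a) :=
  hA.subset inter_subset_left

lemma tail_anti (hA : Bornology.IsBounded A) : Antitone (tail A u) := fun a _ hab =>
  measureReal_mono (fun _ hx => ⟨hx.1, lt_of_le_of_lt hab hx.2⟩)
    (isBounded_upper hA a).measure_lt_top.ne

lemma tail_add_tail_neg (hu : ‖u‖ = 1) (hA : IsOpen A) (hb : Bornology.IsBounded A) (a : ℝ) :
    tail A u a + tail A (-u) (-a) = volume.real A := by
  have hd : Disjoint (upper A u a) (upper A (-u) (-a)) := by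
    rw [Set.disjoint_left]
    rintro x ⟨_, hx⟩ ⟨_, hx'⟩
    simp only [mem_ofPred_eq, inner_neg_left] at hx hx'
    linarith
  unfold tail
  rw [← measureReal_union hd (isOpen_upper hA _).measurableSet
    (isBounded_upper hb a).measure_lt_top.ne (isBounded_upper hb _).measure_lt_top.ne]
  obtain ⟨Φ, hΦ, hΦ1, -⟩ := exists_split u hu
  have hnull : volume {x : Euc (d + 1) | ⟪u, x⟫ = a} = 0 := by
    have := hΦ.measure_preimage (s := ({a} : Set ℝ) ×ˢ univ)
      ((measurableSet_singleton a).prod MeasurableSet.univ).nullMeasurableSet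
    rw [Measure.volume_eq_prod, Measure.prod_prod, Real.volume_singleton, zero_mul] at this
    convert this using 2
    ext x
    simp [hΦ1]
  refine measureReal_congr ?_
  have : ∀ᵐ x : Euc (d + 1), ⟪u, x⟫ ≠ a := by
    rw [ae_iff]
    simpa using hnull
  filter_upwards [this] with x hx
  apply propext
  constructor
  · rintro (h | h) <;> exact h.1
  · intro h
    rcases lt_or_gt_of_ne hx with h1 | h1
    · exact Or.inr ⟨h, by simpa [inner_neg_left] using h1⟩
    · exact Or.inl ⟨h, h1⟩

/-- Equality in Brunn–Minkowski is inherited by the parts cut off from `X` and `Z` by parallel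
hyperplanes leaving equal volumes: the sums of the upper and of the lower parts are disjoint in
`X + t • Z`, and both satisfy Brunn–Minkowski. -/
theorem cut_equality (hu : ‖u‖ = 1) (hX : IsOpen X)
    (hZ : IsOpen Z) (hXb : Bornology.IsBounded X) (hZb : Bornology.IsBounded Z)
    (hXZ : volume.real X = volume.real Z) {t : ℝ} (ht : 0 < t)
    (h : volume.real (X + t • Z) ≤ (1 + t) ^ (d + 1) * volume.real Z) {a b : ℝ}
    (hab : tail X u a = tail Z u b) :
    volume.real (upper X u a + t • upper Z u b) ≤
      (1 + t) ^ (d + 1) * volume.real (upper Z u b) := by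
  have e1 := tail_add_tail_neg hu hX hXb a
  have e2 := tail_add_tail_neg hu hZ hZb b
  have hneg : tail X (-u) (-a) = tail Z (-u) (-b) := by linarith
  have hL := brunnMinkowski_equal (show d + 1 ≠ 0 by omega) (isOpen_upper (u := -u) hX (-a))
    (isOpen_upper (u := -u) hZ (-b)) (isBounded_upper hXb _) (isBounded_upper hZb _) hneg ht
  have hdisj : Disjoint (upper X u a + t • upper Z u b)
      (upper X (-u) (-a) + t • upper Z (-u) (-b)) := by
    rw [Set.disjoint_left]
    rintro _ ⟨x, hx, _, ⟨z, hz, rfl⟩, rfl⟩ ⟨x', hx', _, ⟨z', hz', rfl⟩, h⟩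
    have h1 := congrArg (fun y => ⟪u, y⟫) h
    have k1 : a < ⟪u, x⟫ := hx.2
    have k2 : b < ⟪u, z⟫ := hz.2
    have k3 : -a < ⟪-u, x'⟫ := hx'.2
    have k4 : -b < ⟪-u, z'⟫ := hz'.2
    simp only [inner_add_right, inner_smul_right, inner_neg_left] at h1 k3 k4
    nlinarith
  have hbd : Bornology.IsBounded (X + t • Z) := hXb.add (hZb.smul₀ t)
  have hs1 : upper X u a + t • upper Z u b ⊆ X + t • Z :=
    add_subset_add inter_subset_left (smul_set_mono inter_subset_left)
  have hs2 : upper X (-u) (-a) + t • upper Z (-u) (-b) ⊆ X + t • Z :=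
    add_subset_add inter_subset_left (smul_set_mono inter_subset_left)
  have hm : MeasurableSet (upper X (-u) (-a) + t • upper Z (-u) (-b)) :=
    (isOpen_upper hX _).add_right.measurableSet
  have hU := measureReal_union (μ := volume) hdisj hm (hbd.subset hs1).measure_lt_top.ne
    (hbd.subset hs2).measure_lt_top.ne
  have hle := measureReal_mono (μ := volume) (union_subset hs1 hs2) hbd.measure_lt_top.ne
  rw [hU] at hle
  unfold tail at e2
  rw [← e2, mul_add] at h
  linarith

end cuts

/-! ### Slabs and the sections of a ball -/

section slabs
variable {d : ℕ} {Φ : Euc (d + 1) ≃L[ℝ] ℝ × Euc d} {u : Euc (d + 1)} {A X : Set (Euc (d + 1))}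

lemma sec_image_upper (hΦ1 : ∀ x, (Φ x).1 = ⟪u, x⟫) (a s : ℝ) :
    sec (Φ '' upper A u a) s = (Ioi a).indicator (sec (Φ '' A)) s := by
  by_cases hs : s ∈ Ioi a
  · rw [indicator_of_mem hs]
    unfold sec
    congr 1
    ext v
    constructor
    · rintro ⟨x, hx, h⟩
      exact ⟨x, hx.1, h⟩
    · rintro ⟨x, hx, h⟩
      refine ⟨x, ⟨hx, ?_⟩, h⟩
      show a < ⟪u, x⟫
      rw [← hΦ1, h]
      exact hs
  · rw [indicator_of_notMem hs]
    unfold sec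
    convert measure_empty (μ := (volume : Measure (Euc d)))
    rw [eq_empty_iff_forall_notMem]
    rintro v ⟨x, hx, h⟩
    have h2 : a < ⟪u, x⟫ := hx.2
    rw [← hΦ1, h] at h2
    exact hs h2

lemma volume_upper (hΦ : MeasurePreserving Φ) (hΦ1 : ∀ x, (Φ x).1 = ⟪u, x⟫) (hA : IsOpen A)
    (a : ℝ) : volume (upper A u a) = ∫⁻ s in Ioi a, sec (Φ '' A) s := by
  rw [← volume_image_split hΦ, volume_eq_lintegral_sec (isOpen_image_split (isOpen_upper hA a)),
    ← lintegral_indicator measurableSet_Ioi]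
  exact lintegral_congr fun s => sec_image_upper hΦ1 a s

lemma volume_upper_eq_slab (hΦ : MeasurePreserving Φ) (hΦ1 : ∀ x, (Φ x).1 = ⟪u, x⟫)
    (hA : IsOpen A) {a₁ a₂ : ℝ} (h : a₁ ≤ a₂) :
    volume (upper A u a₁) = (∫⁻ s in Ioc a₁ a₂, sec (Φ '' A) s) + volume (upper A u a₂) := by
  rw [volume_upper hΦ hΦ1 hA, volume_upper hΦ hΦ1 hA, ← Ioc_union_Ioi_eq_Ioi h]
  exact lintegral_union measurableSet_Ioi (Ioc_disjoint_Ioi le_rfl)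

/-- A slab has volume at most its width times a bound for the sections. -/
lemma tail_sub_le (hΦ : MeasurePreserving Φ) (hΦ1 : ∀ x, (Φ x).1 = ⟪u, x⟫) (hA : IsOpen A)
    (hb : Bornology.IsBounded A) {a₁ a₂ M : ℝ} (h : a₁ ≤ a₂) (hM : 0 ≤ M)
    (hsec : ∀ s, a₁ < s → sec (Φ '' A) s ≤ ENNReal.ofReal M) :
    tail A u a₁ - tail A u a₂ ≤ (a₂ - a₁) * M := by
  have e := volume_upper_eq_slab hΦ hΦ1 hA h
  have hle : (∫⁻ s in Ioc a₁ a₂, sec (Φ '' A) s) ≤ ENNReal.ofReal ((a₂ - a₁) * M) := by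
    refine (setLIntegral_mono measurable_const (fun s hs => hsec s hs.1)).trans ?_
    rw [setLIntegral_const, Real.volume_Ioc, ← ENNReal.ofReal_mul hM, mul_comm]
  have h2 := add_le_add_left hle (volume (upper A u a₂))
  rw [← e] at h2
  have h3 := ENNReal.toReal_mono
    (ENNReal.add_ne_top.2 ⟨by simp, (isBounded_upper hb a₂).measure_lt_top.ne⟩) h2
  rw [ENNReal.toReal_add (by simp) (isBounded_upper hb a₂).measure_lt_top.ne,
    ENNReal.toReal_ofReal (mul_nonneg (sub_nonneg.2 h) hM)] at h3
  unfold tail Measure.real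
  linarith

/-- A slab has volume at least its width times a lower bound for its sections. -/
lemma le_tail_sub (hΦ : MeasurePreserving Φ) (hΦ1 : ∀ x, (Φ x).1 = ⟪u, x⟫) (hA : IsOpen A)
    (hb : Bornology.IsBounded A) {a₁ a₂ m : ℝ} (h : a₁ ≤ a₂) (hm : 0 ≤ m)
    (hsec : ∀ s, a₁ < s → s ≤ a₂ → ENNReal.ofReal m ≤ sec (Φ '' A) s) :
    (a₂ - a₁) * m ≤ tail A u a₁ - tail A u a₂ := by
  have e := volume_upper_eq_slab hΦ hΦ1 hA h
  have hle : ENNReal.ofReal ((a₂ - a₁) * m) ≤ ∫⁻ s in Ioc a₁ a₂, sec (Φ '' A) s := by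
    refine le_trans (le_of_eq ?_) (setLIntegral_mono (measurable_sec (isOpen_image_split hA))
      (fun s hs => hsec s hs.1 hs.2))
    rw [setLIntegral_const, Real.volume_Ioc, ← ENNReal.ofReal_mul hm, mul_comm]
  have h2 := add_le_add_left hle (volume (upper A u a₂))
  rw [← e] at h2
  have h3 := ENNReal.toReal_mono (isBounded_upper hb a₁).measure_lt_top.ne h2
  rw [ENNReal.toReal_add (by simp) (isBounded_upper hb a₂).measure_lt_top.ne,
    ENNReal.toReal_ofReal (mul_nonneg (sub_nonneg.2 h) hm)] at h3
  unfold tail Measure.real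
  linarith

lemma continuous_tail (hu : ‖u‖ = 1) (hA : IsOpen A) (hb : Bornology.IsBounded A) :
    Continuous (tail A u) := by
  obtain ⟨Φ, hΦ, hΦ1, -⟩ := exists_split u hu
  have hfin := supSec_lt_top (isBounded_image_split (Φ := Φ) hb)
  refine (LipschitzWith.of_le_add_mul (supSec (Φ '' A)).toNNReal fun x y => ?_).continuous
  rcases le_total x y with h | h
  · have := tail_sub_le hΦ hΦ1 hA hb h ENNReal.toReal_nonneg
      (fun s _ => by rw [ENNReal.ofReal_toReal hfin.ne]; exact sec_le_supSec s)
    rw [Real.dist_eq, abs_sub_comm, abs_of_nonneg (sub_nonneg.2 h)]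
    have e : ((supSec (Φ '' A)).toNNReal : ℝ) = (supSec (Φ '' A)).toReal := rfl
    rw [e]
    linarith
  · have := tail_anti (u := u) hb h
    have : 0 ≤ ((supSec (Φ '' A)).toNNReal : ℝ) * dist x y := by positivity
    linarith

lemma exists_tail_eq (hu : ‖u‖ = 1) (hA : IsOpen A) (hb : Bornology.IsBounded A) {v : ℝ}
    (h0 : 0 ≤ v) (h1 : v ≤ volume.real A) : ∃ a, tail A u a = v := by
  obtain ⟨K, hK⟩ := hb.exists_norm_le
  have hin : ∀ x ∈ A, |⟪u, x⟫| ≤ |K| := fun x hx => by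
    have := abs_real_inner_le_norm u x
    rw [hu, one_mul] at this
    exact this.trans ((hK x hx).trans (le_abs_self K))
  have hlo : tail A u (-|K| - 1) = volume.real A := by
    unfold tail upper
    congr 1
    refine inter_eq_left.2 fun x hx => ?_
    show -|K| - 1 < ⟪u, x⟫
    linarith [neg_abs_le ⟪u, x⟫, hin x hx]
  have hhi : tail A u |K| = 0 := by
    unfold tail
    convert measureReal_empty (μ := (volume : Measure (Euc (d + 1))))
    rw [eq_empty_iff_forall_notMem]
    rintro x ⟨hx, hx'⟩
    have hx' : |K| < ⟪u, x⟫ := hx'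
    linarith [le_abs_self ⟪u, x⟫, hin x hx]
  have hab : -|K| - 1 ≤ |K| := by linarith [abs_nonneg K]
  obtain ⟨a, -, ha⟩ := intermediate_value_Icc' hab (continuous_tail hu hA hb).continuousOn
    (show v ∈ Icc _ _ from ⟨by rw [hhi]; exact h0, by rw [hlo]; exact h1⟩)
  exact ⟨a, ha⟩

/-- The `d`-dimensional volume of the section at height `s` of the ball of radius `ρ` in `ℝᵈ⁺¹`. -/
def ballSec (d : ℕ) (ρ s : ℝ) : ℝ := volume.real {v : Euc d | s ^ 2 + ‖v‖ ^ 2 < ρ ^ 2}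

lemma isBounded_ballSec (d : ℕ) (ρ s : ℝ) :
    Bornology.IsBounded {v : Euc d | s ^ 2 + ‖v‖ ^ 2 < ρ ^ 2} := by
  refine isBounded_iff_forall_norm_le.2 ⟨|ρ|, fun v hv => ?_⟩
  have hv : s ^ 2 + ‖v‖ ^ 2 < ρ ^ 2 := hv
  rw [← abs_of_nonneg (norm_nonneg v)]
  exact (sq_lt_sq.1 (by nlinarith [sq_nonneg s])).le

lemma ballSec_anti {ρ s s' : ℝ} (h0 : 0 ≤ s) (h : s ≤ s') : ballSec d ρ s' ≤ ballSec d ρ s := by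
  refine measureReal_mono (fun v hv => ?_) (isBounded_ballSec d ρ s).measure_lt_top.ne
  have hv : s' ^ 2 + ‖v‖ ^ 2 < ρ ^ 2 := hv
  show s ^ 2 + ‖v‖ ^ 2 < ρ ^ 2
  nlinarith

lemma ballSec_pos {ρ s : ℝ} (h0 : 0 ≤ s) (h : s < ρ) : 0 < ballSec d ρ s := by
  refine ENNReal.toReal_pos (IsOpen.measure_pos _ (isOpen_lt (by fun_prop) (by fun_prop))
    ⟨0, ?_⟩).ne' (isBounded_ballSec d ρ s).measure_lt_top.ne
  show s ^ 2 + ‖(0 : Euc d)‖ ^ 2 < ρ ^ 2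
  simp only [norm_zero]
  nlinarith

lemma sec_ball (hΦ2 : ∀ x, ‖x‖ ^ 2 = (Φ x).1 ^ 2 + ‖(Φ x).2‖ ^ 2) {ρ : ℝ} (hρ : 0 < ρ) (s : ℝ) :
    sec (Φ '' ball 0 ρ) s = ENNReal.ofReal (ballSec d ρ s) := by
  unfold ballSec sec
  rw [measureReal_def, ENNReal.ofReal_toReal (isBounded_ballSec d ρ s).measure_lt_top.ne]
  congr 1
  ext v
  have key : ∀ x : Euc (d + 1), x ∈ ball 0 ρ ↔ (Φ x).1 ^ 2 + ‖(Φ x).2‖ ^ 2 < ρ ^ 2 := by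
    intro x
    rw [mem_ball_zero_iff, ← hΦ2, sq_lt_sq, abs_of_nonneg (norm_nonneg x), abs_of_pos hρ]
  constructor
  · rintro ⟨x, hx, h⟩
    have := (key x).1 hx
    rw [h] at this
    exact this
  · intro hv
    refine ⟨Φ.symm (s, v), (key _).2 ?_, by simp⟩
    simpa using hv

/-- In the equality case, matching slabs of the ball and of `X`: the slab of the ball has volume at
least `(b₂ - b₁) * ballSec d ρ b₂`. The slab of `X` has the same volume, and its sections are at
most `ballSec d ρ b₁`, since the parts above `a₁` and `b₁` have the same maximal section volume. -/
theorem slope_local (hd : d ≠ 0) (hu : ‖u‖ = 1) (hX : IsOpen X) (hXb : Bornology.IsBounded X)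
    {ρ t : ℝ} (hρ : 0 < ρ) (ht : 0 < t)
    (hXZ : volume.real X = volume.real (ball (0 : Euc (d + 1)) ρ))
    (h : volume.real (X + t • ball (0 : Euc (d + 1)) ρ) ≤
      (1 + t) ^ (d + 1) * volume.real (ball (0 : Euc (d + 1)) ρ))
    {a₁ a₂ b₁ b₂ : ℝ} (hb0 : 0 ≤ b₁) (hb : b₁ < b₂) (hbρ : b₂ < ρ)
    (h1 : tail X u a₁ = tail (ball 0 ρ) u b₁) (h2 : tail X u a₂ = tail (ball 0 ρ) u b₂) :
    (b₂ - b₁) * ballSec d ρ b₂ ≤ (a₂ - a₁) * ballSec d ρ b₁ := by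
  obtain ⟨Φ, hΦ, hΦ1, hΦ2⟩ := exists_split u hu
  have hZb : Bornology.IsBounded (ball (0 : Euc (d + 1)) ρ) := isBounded_ball
  have hf2 : 0 < ballSec d ρ b₂ := ballSec_pos (hb0.trans hb.le) hbρ
  have hlow := le_tail_sub hΦ hΦ1 isOpen_ball hZb hb.le hf2.le (fun s hs hs' => by
    rw [sec_ball hΦ2 hρ]
    exact ENNReal.ofReal_le_ofReal (ballSec_anti (hb0.trans hs.le) hs'))
  have hlow0 : 0 < (b₂ - b₁) * ballSec d ρ b₂ := mul_pos (sub_pos.2 hb) hf2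
  have ha : a₁ ≤ a₂ := by
    by_contra hcon
    have := tail_anti (u := u) hXb (not_le.1 hcon).le
    linarith
  have hZ1 : 0 < tail (ball 0 ρ) u b₁ := by
    have : 0 ≤ tail (ball 0 ρ) u b₂ := measureReal_nonneg
    linarith
  have hcut := cut_equality hu hX isOpen_ball hXb hZb hXZ ht h h1
  have hsup := supSec_eq_of_equality (Φ := Φ) hd hΦ (isOpen_upper hX a₁)
    (isOpen_upper (u := u) isOpen_ball b₁)
    (isBounded_upper hXb a₁) (isBounded_upper hZb b₁) h1 hZ1 ht hcut
  have hsupZ : supSec (Φ '' upper (ball 0 ρ) u b₁) ≤ ENNReal.ofReal (ballSec d ρ b₁) := by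
    refine iSup_le fun s => ?_
    rw [sec_image_upper hΦ1]
    by_cases hs : s ∈ Ioi b₁
    swap
    · rw [indicator_of_notMem hs]
      exact zero_le
    rw [indicator_of_mem hs, sec_ball hΦ2 hρ]
    exact ENNReal.ofReal_le_ofReal (ballSec_anti hb0 (le_of_lt hs))
  have hup := tail_sub_le hΦ hΦ1 hX hXb ha (ballSec_pos hb0 (hb.trans hbρ)).le (fun s hs => by
    refine le_trans ?_ (hsup.le.trans hsupZ)
    refine le_trans (le_of_eq ?_) (sec_le_supSec s)
    rw [sec_image_upper hΦ1, indicator_of_mem (mem_Ioi.2 hs)])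
  linarith

/-- A local comparison of increments with error factor `f y / f x`, for `f` antitone and positive,
sums up over fine subdivisions of `[p, q]` to the comparison without error. -/
lemma sub_le_of_local {φ f : ℝ → ℝ} {p q : ℝ} (hpq : p ≤ q)
    (hf : ∀ x y, p ≤ x → x ≤ y → y ≤ q → f y ≤ f x) (hq : 0 < f q)
    (h : ∀ x y, p ≤ x → x < y → y ≤ q → (y - x) * f y ≤ (φ y - φ x) * f x) :
    q - p ≤ φ q - φ p := by
  rcases hpq.eq_or_lt with rfl | hpq'
  · simp
  set C := (f p - f q) / f q with hC
  have hC0 : 0 ≤ C := div_nonneg (sub_nonneg.2 (hf p q le_rfl hpq le_rfl)) hq.le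
  have hloc : ∀ x y, p ≤ x → x < y → y ≤ q →
      (y - x) - (y - x) * ((f x - f y) / f q) ≤ φ y - φ x := by
    intro x y hx hxy hy
    have hfx : f q ≤ f x := hf x q hx (hxy.le.trans hy) le_rfl
    have hfxy : f y ≤ f x := hf x y hx hxy.le hy
    have hx0 : 0 < f x := hq.trans_le hfx
    have h1 : (y - x) * (f y / f x) ≤ φ y - φ x := by
      rw [← mul_div_assoc, div_le_iff₀ hx0]
      exact h x y hx hxy hy
    have h2 : f y / f x = 1 - (f x - f y) / f x := by field_simp; ring
    have h3 : (f x - f y) / f x ≤ (f x - f y) / f q :=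
      div_le_div_of_nonneg_left (sub_nonneg.2 hfxy) hq hfx
    have h4 : (y - x) * (1 - (f x - f y) / f q) ≤ (y - x) * (f y / f x) :=
      mul_le_mul_of_nonneg_left (by rw [h2]; linarith) (sub_nonneg.2 hxy.le)
    linarith
  have hN : ∀ N : ℕ, (q - p) - (q - p) * C * (1 / ((N : ℝ) + 1)) ≤ φ q - φ p := by
    intro N
    set η := (q - p) / ((N : ℝ) + 1) with hη
    have hη0 : 0 < η := div_pos (sub_pos.2 hpq') (by positivity)
    have hηN : ((N : ℝ) + 1) * η = q - p := by rw [hη]; field_simp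
    have hind : ∀ k : ℕ, k ≤ N + 1 →
        k * η - η * ((f p - f (p + k * η)) / f q) ≤ φ (p + k * η) - φ p := by
      intro k
      induction k with
      | zero => intro _; simp
      | succ k ih =>
        intro hk
        have ih := ih (by omega)
        have hkN : ((k + 1 : ℕ) : ℝ) ≤ (N : ℝ) + 1 := by exact_mod_cast hk
        have hle : p + ((k + 1 : ℕ) : ℝ) * η ≤ q := by nlinarith
        have := hloc (p + k * η) (p + ((k + 1 : ℕ) : ℝ) * η)
          (by linarith [mul_nonneg (Nat.cast_nonneg (α := ℝ) k) hη0.le])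
          (by push_cast; linarith) hle
        have e : p + ((k + 1 : ℕ) : ℝ) * η - (p + k * η) = η := by push_cast; ring
        rw [e] at this
        have e2 : (f p - f (p + ((k + 1 : ℕ) : ℝ) * η)) / f q =
            (f p - f (p + k * η)) / f q +
              (f (p + k * η) - f (p + ((k + 1 : ℕ) : ℝ) * η)) / f q := by
          rw [← add_div]; congr 1; ring
        rw [e2, mul_add]
        push_cast at *
        linarith
    have := hind (N + 1) le_rfl
    push_cast at this
    rw [hηN, add_sub_cancel] at this
    have e : η * ((f p - f q) / f q) = (q - p) * C * (1 / ((N : ℝ) + 1)) := by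
      rw [hη, hC]; ring
    rw [e] at this
    exact this
  have hlim : Tendsto (fun N : ℕ => (q - p) - (q - p) * C * (1 / ((N : ℝ) + 1))) atTop
      (nhds ((q - p) - (q - p) * C * 0)) :=
    (tendsto_one_div_add_atTop_nhds_zero_nat.const_mul _).const_sub _
  rw [mul_zero, sub_zero] at hlim
  exact le_of_tendsto' hlim hN

end slabs

/-! ### Centroids and the equality case -/

section centroid
variable {d : ℕ} {u : Euc (d + 1)} {A X : Set (Euc (d + 1))}

/-- The function `φ` matching the upper volumes of `X` with those of the ball increases with slope
at least one. Here above the centre of the ball, where its sections decrease. -/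
lemma slope_nonneg (hd : d ≠ 0) (hu : ‖u‖ = 1) (hX : IsOpen X) (hXb : Bornology.IsBounded X)
    {ρ t : ℝ} (hρ : 0 < ρ) (ht : 0 < t)
    (hXZ : volume.real X = volume.real (ball (0 : Euc (d + 1)) ρ))
    (h : volume.real (X + t • ball (0 : Euc (d + 1)) ρ) ≤
      (1 + t) ^ (d + 1) * volume.real (ball (0 : Euc (d + 1)) ρ))
    {φ : ℝ → ℝ} (hφ : ∀ b, tail X u (φ b) = tail (ball 0 ρ) u b)
    {b b' : ℝ} (hb0 : 0 ≤ b) (hb : b ≤ b') (hbρ : b' < ρ) : b' - b ≤ φ b' - φ b :=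
  sub_le_of_local (f := ballSec d ρ) hb (fun _ _ hx hxy _ => ballSec_anti (hb0.trans hx) hxy)
    (ballSec_pos (hb0.trans hb) hbρ) fun x y hx hxy hy =>
      slope_local hd hu hX hXb hρ ht hXZ h (hb0.trans hx) hxy (hy.trans_lt hbρ) (hφ x) (hφ y)

/-- The slope bound of `slope_nonneg` on all of `(-ρ, ρ)`; below the centre it follows by reversing
`u`. -/
lemma sub_le_matching (hd : d ≠ 0) (hu : ‖u‖ = 1) (hX : IsOpen X) (hXb : Bornology.IsBounded X)
    {ρ t : ℝ} (hρ : 0 < ρ) (ht : 0 < t)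
    (hXZ : volume.real X = volume.real (ball (0 : Euc (d + 1)) ρ))
    (h : volume.real (X + t • ball (0 : Euc (d + 1)) ρ) ≤
      (1 + t) ^ (d + 1) * volume.real (ball (0 : Euc (d + 1)) ρ))
    {φ : ℝ → ℝ} (hφ : ∀ b, tail X u (φ b) = tail (ball 0 ρ) u b)
    {b b' : ℝ} (hb0 : -ρ < b) (hb : b ≤ b') (hbρ : b' < ρ) : b' - b ≤ φ b' - φ b := by
  have hpos : ∀ {x y : ℝ}, 0 ≤ x → x ≤ y → y < ρ → y - x ≤ φ y - φ x := fun hx hxy hy =>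
    slope_nonneg hd hu hX hXb hρ ht hXZ h hφ hx hxy hy
  have hneg : ∀ {x y : ℝ}, -ρ < x → x ≤ y → y ≤ 0 → y - x ≤ φ y - φ x := by
    intro x y hx hxy hy
    have := slope_nonneg (u := -u) (φ := fun s => -φ (-s)) hd (by rw [norm_neg, hu]) hX hXb hρ ht
      hXZ h (fun s => by
        have e1 := tail_add_tail_neg hu hX hXb (φ (-s))
        have e2 := tail_add_tail_neg hu isOpen_ball
          (isBounded_ball (x := (0 : Euc (d + 1))) (r := ρ)) (-s)
        rw [neg_neg] at e2
        have := hφ (-s)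
        linarith) (b := -y) (b' := -x) (by linarith) (by linarith) (by linarith)
    simp only [neg_neg] at this
    linarith
  rcases le_total 0 b with h0 | h0
  · exact hpos h0 hb hbρ
  rcases le_total b' 0 with h1 | h1
  · exact hneg hb0 hb h1
  · have := hpos le_rfl h1 hbρ
    have := hneg hb0 h0 le_rfl
    linarith

lemma integrableOn_inner (hA : Bornology.IsBounded A) (u : Euc (d + 1)) :
    IntegrableOn (fun x => ⟪u, x⟫) A :=
  (ContinuousOn.integrableOn_compact hA.isCompact_closure
    (by fun_prop)).mono_set subset_closure

/-- The moment of `A` in direction `u` as an integral of its upper volumes. -/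
lemma ofReal_integral_inner (hA : IsOpen A) (hb : Bornology.IsBounded A) {c : ℝ}
    (hc : ∀ x ∈ A, 0 ≤ ⟪u, x⟫ + c) :
    0 ≤ (∫ x in A, ⟪u, x⟫) + c * volume.real A ∧
    ENNReal.ofReal ((∫ x in A, ⟪u, x⟫) + c * volume.real A) =
      ∫⁻ t in Ioi (0 : ℝ), ENNReal.ofReal (tail A u (t - c)) := by
  have hfin : IsFiniteMeasure (volume.restrict A) :=
    ⟨by rw [Measure.restrict_apply_univ]; exact hb.measure_lt_top⟩
  have hint : Integrable (fun x => ⟪u, x⟫ + c) (volume.restrict A) :=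
    (integrableOn_inner hb u).add (integrable_const c)
  have e : (∫ x in A, ⟪u, x⟫) + c * volume.real A = ∫ x in A, (⟪u, x⟫ + c) := by
    rw [integral_add (integrableOn_inner hb u) (integrable_const c), setIntegral_const,
      smul_eq_mul, mul_comm c]
  have hnn : 0 ≤ᵐ[volume.restrict A] fun x => ⟪u, x⟫ + c := by
    filter_upwards [ae_restrict_mem hA.measurableSet] with x hx using hc x hx
  rw [e]
  refine ⟨integral_nonneg_of_ae hnn, ?_⟩
  rw [ofReal_integral_eq_lintegral_ofReal hint hnn,
    lintegral_eq_lintegral_meas_lt _ hnn (by fun_prop)]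
  refine lintegral_congr fun s => ?_
  unfold tail
  rw [measureReal_def, ENNReal.ofReal_toReal (isBounded_upper hb _).measure_lt_top.ne,
    Measure.restrict_apply (measurableSet_lt (by fun_prop) (by fun_prop)), inter_comm]
  congr 1
  ext x
  show x ∈ A ∧ s < ⟪u, x⟫ + c ↔ x ∈ A ∧ s - c < ⟪u, x⟫
  rw [sub_lt_iff_lt_add]

lemma integral_inner_ball (ρ : ℝ) : ∫ x in ball (0 : Euc (d + 1)) ρ, ⟪u, x⟫ = 0 := by
  have h := (Measure.measurePreserving_neg (volume : Measure (Euc (d + 1)))).setIntegral_preimage_emb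
    (MeasurableEquiv.neg (Euc (d + 1))).measurableEmbedding (fun x => ⟪u, x⟫) (ball 0 ρ)
  have e : (Neg.neg : Euc (d + 1) → Euc (d + 1)) ⁻¹' ball 0 ρ = ball 0 ρ := by
    ext x; simp
  rw [e] at h
  simp only [inner_neg_right, integral_neg] at h
  linarith

/-- In the equality case, with `z` the centroid of `X`, every upper bound `H` of `⟪u, ·⟫` on `X`
is at least `⟪u, z⟫ + ρ`, as for the ball of radius `ρ` about `z`: as `φ` has slope at least one,
the upper volumes of `X` are below those of the ball shifted so that its top has height `H`. -/
theorem support_ge (hd : d ≠ 0) (hu : ‖u‖ = 1) (hX : IsOpen X) (hXb : Bornology.IsBounded X)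
    {ρ t : ℝ} (hρ : 0 < ρ) (ht : 0 < t)
    (hXZ : volume.real X = volume.real (ball (0 : Euc (d + 1)) ρ))
    (h : volume.real (X + t • ball (0 : Euc (d + 1)) ρ) ≤
      (1 + t) ^ (d + 1) * volume.real (ball (0 : Euc (d + 1)) ρ))
    {H : ℝ} (hH : ∀ x ∈ X, ⟪u, x⟫ < H) :
    (∫ x in X, ⟪u, x⟫) + ρ * volume.real X ≤ H * volume.real X := by
  have hZb : Bornology.IsBounded (ball (0 : Euc (d + 1)) ρ) := isBounded_ball
  have hex : ∀ b, ∃ a, tail X u a = tail (ball 0 ρ) u b := fun b =>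
    exists_tail_eq hu hX hXb measureReal_nonneg (by
      rw [hXZ]
      exact measureReal_mono inter_subset_left hZb.measure_lt_top.ne)
  choose φ hφ using hex
  have hφle : ∀ b, -ρ < b → b < ρ → φ b ≤ H - ρ + b := by
    intro b hb hbρ
    have hb' : ∀ b', b ≤ b' → b' < ρ → φ b ≤ H - b' + b := by
      intro b' hbb' hb'ρ
      have hs := sub_le_matching hd hu hX hXb hρ ht hXZ h hφ hb hbb' hb'ρ
      have hpos : 0 < tail (ball 0 ρ) u b' := by
        refine ENNReal.toReal_pos ((isOpen_upper isOpen_ball b').measure_pos _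
          ⟨((max b' 0 + ρ) / 2) • u, ?_, ?_⟩).ne' (isBounded_upper hZb b').measure_lt_top.ne
        · have : max b' 0 < ρ := max_lt hb'ρ hρ
          rw [mem_ball_zero_iff, norm_smul, hu, mul_one, Real.norm_eq_abs,
            abs_of_nonneg (by have := le_max_right b' 0; linarith)]
          linarith
        · show b' < ⟪u, _⟫
          rw [inner_smul_right, real_inner_self_eq_norm_sq, hu]
          have := le_max_left b' 0
          have : max b' 0 < ρ := max_lt hb'ρ hρ
          linarith
      rw [← hφ b'] at hpos
      obtain ⟨x, hx, hx'⟩ := nonempty_of_measureReal_ne_zero (ne_of_gt hpos)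
      have hx' : φ b' < ⟪u, x⟫ := hx'
      have := hH x hx
      linarith
    refine le_of_forall_pos_le_add fun ε hε => ?_
    have := hb' (max b (ρ - ε)) (le_max_left _ _) (max_lt hbρ (by linarith))
    have := le_max_right b (ρ - ε)
    linarith
  have htail : ∀ b, tail X u (b - (ρ - H)) ≤ tail (ball 0 ρ) u b := by
    intro b
    rcases le_or_gt b (-ρ) with hb | hb
    · have e : tail (ball 0 ρ) u b = volume.real (ball (0 : Euc (d + 1)) ρ) := by
        unfold tail upper
        congr 1
        refine inter_eq_left.2 fun x hx => ?_
        show b < ⟪u, x⟫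
        have h1 := abs_real_inner_le_norm u x
        rw [hu, one_mul] at h1
        have h2 := mem_ball_zero_iff.1 hx
        linarith [neg_abs_le ⟪u, x⟫]
      rw [e, ← hXZ]
      exact measureReal_mono inter_subset_left hXb.measure_lt_top.ne
    rcases lt_or_ge b ρ with hb' | hb'
    · rw [← hφ b]
      exact tail_anti hXb (by linarith [hφle b hb hb'])
    · have e : upper X u (b - (ρ - H)) = ∅ := by
        rw [eq_empty_iff_forall_notMem]
        rintro x ⟨hx, hx'⟩
        have hx' : b - (ρ - H) < ⟪u, x⟫ := hx'
        linarith [hH x hx]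
      unfold tail
      rw [e, measureReal_empty]
      exact measureReal_nonneg
  obtain ⟨K, hK⟩ := (hXb.union hZb).exists_norm_le
  have hin : ∀ x ∈ X ∪ ball 0 ρ, 0 ≤ ⟪u, x⟫ + K := fun x hx => by
    have h1 := abs_real_inner_le_norm u x
    rw [hu, one_mul] at h1
    linarith [neg_abs_le ⟪u, x⟫, hK x hx]
  set c := K + |ρ - H| with hc
  obtain ⟨-, eX⟩ := ofReal_integral_inner (u := u) (c := c + (ρ - H)) hX hXb (fun x hx => by
    linarith [hin x (Or.inl hx), neg_abs_le (ρ - H)])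
  obtain ⟨hnn, eZ⟩ := ofReal_integral_inner (u := u) (c := c) isOpen_ball hZb (fun x hx => by
    linarith [hin x (Or.inr hx), abs_nonneg (ρ - H)])
  have hle : ENNReal.ofReal ((∫ x in X, ⟪u, x⟫) + (c + (ρ - H)) * volume.real X) ≤
      ENNReal.ofReal ((∫ x in ball (0 : Euc (d + 1)) ρ, ⟪u, x⟫) +
        c * volume.real (ball (0 : Euc (d + 1)) ρ)) := by
    rw [eX, eZ]
    refine lintegral_mono fun s => ENNReal.ofReal_le_ofReal ?_
    rw [← sub_sub]
    exact htail (s - c)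
  rw [ENNReal.ofReal_le_ofReal_iff hnn, integral_inner_ball, ← hXZ] at hle
  linarith

/-- Equality case of Brunn–Minkowski, for a convex set and a ball of the same volume. The ball
around the centroid is contained in `X`, since no half-space containing `X` can miss a point of
it. -/
theorem exists_ball_subset (hd : d ≠ 0) (hX : IsOpen X) (hXb : Bornology.IsBounded X)
    (hXc : Convex ℝ X) {ρ t : ℝ} (hρ : 0 < ρ) (ht : 0 < t)
    (hXZ : volume.real X = volume.real (ball (0 : Euc (d + 1)) ρ))
    (h : volume.real (X + t • ball (0 : Euc (d + 1)) ρ) ≤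
      (1 + t) ^ (d + 1) * volume.real (ball (0 : Euc (d + 1)) ρ)) :
    ∃ z, ball z ρ ⊆ X := by
  have hV : 0 < volume.real X := by
    rw [hXZ]
    exact ENNReal.toReal_pos (measure_ball_pos _ _ hρ).ne' measure_ball_lt_top.ne
  refine ⟨(volume.real X)⁻¹ • ∫ x in X, x, fun y hy => ?_⟩
  set z := (volume.real X)⁻¹ • ∫ x in X, x with hz
  by_contra hyX
  obtain ⟨f, hf⟩ := geometric_hahn_banach_open_point hXc hX hyX
  obtain ⟨x₀, hx₀⟩ := nonempty_of_measureReal_ne_zero hV.ne'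
  set w := (InnerProductSpace.toDual ℝ (Euc (d + 1))).symm f with hw
  have hfw : ∀ x, f x = ⟪w, x⟫ := fun x => by
    rw [hw, InnerProductSpace.toDual_symm_apply]
  have hw0 : w ≠ 0 := by
    intro h0
    have := hf x₀ hx₀
    rw [hfw, hfw, h0, inner_zero_left, inner_zero_left] at this
    exact lt_irrefl _ this
  have hwn : 0 < ‖w‖ := norm_pos_iff.2 hw0
  set u := ‖w‖⁻¹ • w with hu
  have hu1 : ‖u‖ = 1 := by
    rw [hu, norm_smul, norm_inv, norm_norm, inv_mul_cancel₀ hwn.ne']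
  have hsep : ∀ x ∈ X, ⟪u, x⟫ < ⟪u, y⟫ := fun x hx => by
    rw [hu, real_inner_smul_left, real_inner_smul_left, ← hfw, ← hfw]
    exact mul_lt_mul_of_pos_left (hf x hx) (inv_pos.2 hwn)
  have hge := support_ge hd hu1 hX hXb hρ ht hXZ h hsep
  have hint : IntegrableOn (fun x : Euc (d + 1) => x) X :=
    (ContinuousOn.integrableOn_compact hXb.isCompact_closure
      (by fun_prop)).mono_set subset_closure
  have hcen : ∫ x in X, ⟪u, x⟫ = ⟪u, z⟫ * volume.real X := by
    rw [integral_inner hint, hz, inner_smul_right]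
    field_simp
  rw [hcen, ← add_mul] at hge
  have hge := le_of_mul_le_mul_right hge hV
  have hcs := real_inner_le_norm u (y - z)
  rw [hu1, one_mul, inner_sub_right] at hcs
  have := mem_ball_iff_norm.1 hy
  linarith

end centroid

/-! ### Inner parallel sets -/

section parallel
variable {d : ℕ} {Ω : Set (Euc (d + 1))} {x : Euc (d + 1)} {r s : ℝ}

/-- A point of `Ω` is as close to the complement of `Ω` as it is to some boundary point. -/
lemma exists_frontier_infDist_compl (hb : Bornology.IsBounded Ω) (hx : x ∈ Ω) :
    ∃ y ∈ frontier Ω, infDist x Ωᶜ = dist x y :=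
  exists_mem_frontier_infDist_compl_eq_dist hx fun h =>
    NormedSpace.unbounded_univ ℝ (Euc (d + 1)) (h ▸ hb)

lemma ball_infDist_frontier_subset (hb : Bornology.IsBounded Ω) (hx : x ∈ Ω) :
    ball x (infDist x (frontier Ω)) ⊆ Ω := by
  obtain ⟨y, hy, hxy⟩ := exists_frontier_infDist_compl hb hx
  exact (ball_subset_ball ((infDist_le_dist_of_mem hy).trans hxy.ge)).trans
    ball_infDist_compl_subset

lemma le_infDist_frontier (ho : IsOpen Ω) (hb : Bornology.IsBounded Ω) (hx : x ∈ Ω)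
    (h : ball x s ⊆ Ω) : s ≤ infDist x (frontier Ω) := by
  obtain ⟨y, hy, -⟩ := exists_frontier_infDist_compl hb hx
  refine (le_infDist ⟨y, hy⟩).2 fun z hz => ?_
  by_contra! hlt
  rw [ho.frontier_eq] at hz
  exact hz.2 (h (mem_ball'.2 hlt))

lemma isOpen_innerParallel (ho : IsOpen Ω) : IsOpen (innerParallel Ω r) :=
  ho.inter (isOpen_lt continuous_const (continuous_infDist_pt _))

lemma innerParallel_subset : innerParallel Ω r ⊆ Ω := fun _ hx => hx.1

lemma convex_innerParallel (ho : IsOpen Ω) (hb : Bornology.IsBounded Ω) (hc : Convex ℝ Ω)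
    : Convex ℝ (innerParallel Ω r) := by
  rintro x ⟨hx, hxr⟩ y ⟨hy, hyr⟩ a b ha hb' hab
  have hz : a • x + b • y ∈ Ω := hc hx hy ha hb' hab
  set s := min (infDist x (frontier Ω)) (infDist y (frontier Ω)) with hs
  refine ⟨hz, (lt_min hxr hyr).trans_le (le_infDist_frontier ho hb hz fun w hw => ?_)⟩
  -- Translating by `v = w - (a x + b y)` keeps both `x` and `y` inside `Ω`.
  have hv : ‖w - (a • x + b • y)‖ < s := by rwa [← mem_ball_iff_norm]
  have h1 : x + (w - (a • x + b • y)) ∈ Ω := ball_infDist_frontier_subset hb hx (by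
    rw [mem_ball_iff_norm, add_sub_cancel_left]; exact hv.trans_le (min_le_left _ _))
  have h2 : y + (w - (a • x + b • y)) ∈ Ω := ball_infDist_frontier_subset hb hy (by
    rw [mem_ball_iff_norm, add_sub_cancel_left]; exact hv.trans_le (min_le_right _ _))
  have := hc h1 h2 ha hb' hab
  have e : a • (x + (w - (a • x + b • y))) + b • (y + (w - (a • x + b • y))) = w := by
    rw [smul_add, smul_add, add_add_add_comm, ← add_smul, hab, one_smul]
    abel
  rwa [e] at this

lemma innerParallel_add_ball (hb : Bornology.IsBounded Ω) :
    innerParallel Ω r + ball 0 r ⊆ Ω := by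
  rintro _ ⟨x, ⟨hx, hxr⟩, v, hv, rfl⟩
  refine ball_infDist_frontier_subset hb hx ?_
  rw [mem_ball_iff_norm, add_sub_cancel_left]
  exact (mem_ball_zero_iff.1 hv).trans hxr

lemma volume_real_ball (x : Euc (d + 1)) (hr : 0 ≤ r) :
    volume.real (ball x r) = volume.real (ball (0 : Euc (d + 1)) 1) * r ^ (d + 1) := by
  rw [measureReal_def, Measure.addHaar_ball _ _ hr, ENNReal.toReal_mul,
    ENNReal.toReal_ofReal (by positivity), finrank_euclideanSpace_fin, measureReal_def, mul_comm]

lemma volume_real_unitBall_pos : 0 < volume.real (ball (0 : Euc (d + 1)) 1) :=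
  ENNReal.toReal_pos (measure_ball_pos _ _ one_pos).ne' measure_ball_lt_top.ne

lemma exists_volume_eq_ball (X : Set (Euc (d + 1))) :
    ∃ ρ, 0 ≤ ρ ∧ volume.real X = volume.real (ball (0 : Euc (d + 1)) 1) * ρ ^ (d + 1) := by
  have hκ := volume_real_unitBall_pos (d := d)
  refine ⟨(volume.real X / volume.real (ball (0 : Euc (d + 1)) 1)) ^ (((d + 1 : ℕ) : ℝ)⁻¹),
    by positivity, ?_⟩
  rw [Real.rpow_inv_natCast_pow (by positivity) (by simp)]
  field_simp

/-- The graph of `m ↦ mⁿ⁺¹` lies above its tangent at `s`. -/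
lemma tangent_pow (n : ℕ) {m s : ℝ} (hm : 0 ≤ m) (hs : 0 ≤ s) :
    s ^ n * ((n + 1) * m - n * s) ≤ m ^ (n + 1) := by
  rcases hs.eq_or_lt with rfl | hs
  · rcases n with _ | n
    · simp
    · simp only [ne_eq, Nat.add_eq_zero_iff, one_ne_zero, and_false, not_false_eq_true, zero_pow,
        zero_mul]
      positivity
  have h := one_add_mul_le_pow (a := m / s - 1) (by
    have : 0 ≤ m / s := by positivity
    linarith) (n + 1)
  have h' := mul_le_mul_of_nonneg_left h (pow_nonneg hs.le (n + 1))
  rw [← mul_pow] at h'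
  have e1 : s * (1 + (m / s - 1)) = m := by field_simp; ring
  rw [e1] at h'
  refine le_trans (le_of_eq ?_) h'
  push_cast
  field_simp
  ring

/-- The maximum of `r ↦ r (R - r)ⁿ` on `[0, R]`, attained at `r = R / (n + 1)`. -/
lemma mul_pow_le_max {n : ℕ} (hn : n ≠ 0) {r R : ℝ} (hr : 0 ≤ r) (hrR : r ≤ R) :
    r * (R - r) ^ n ≤ n ^ n * R ^ (n + 1) / (n + 1) ^ (n + 1) := by
  have h := tangent_pow n (m := n * R / (n + 1)) (s := R - r)
    (by have := hr.trans hrR; positivity) (by linarith)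
  have hn' : (0 : ℝ) < n := by positivity
  have e : (n + 1) * (n * R / (n + 1)) - n * (R - r) = n * r := by field_simp; ring
  rw [e, div_pow, mul_pow, pow_succ (n : ℝ)] at h
  refine le_of_mul_le_mul_left (le_trans (le_of_eq ?_) (h.trans (le_of_eq ?_))) hn'
  · ring
  · ring

/-- If `|Ω_r| = |B_ρ| > 0` and `|Ω| = |B_R|`, Brunn–Minkowski for `Ω_r + B_r ⊆ Ω` reads
`ρ + r ≤ R`. -/
lemma radius_add_le (ho : IsOpen Ω) (hb : Bornology.IsBounded Ω) (hr : 0 < r) {ρ R : ℝ}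
    (hρ : 0 < ρ) (hR : 0 ≤ R)
    (hX : volume.real (innerParallel Ω r) = volume.real (ball (0 : Euc (d + 1)) 1) * ρ ^ (d + 1))
    (hΩ : volume.real Ω = volume.real (ball (0 : Euc (d + 1)) 1) * R ^ (d + 1)) :
    ρ + r ≤ R := by
  have hs : (r / ρ) • ball (0 : Euc (d + 1)) ρ = ball 0 r := by
    rw [_root_.smul_ball (by positivity), smul_zero, Real.norm_of_nonneg (by positivity),
      div_mul_cancel₀ _ hρ.ne']
  have h := brunnMinkowski_equal d.succ_ne_zero (isOpen_innerParallel ho (r := r))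
    (isOpen_ball (x := (0 : Euc (d + 1))) (ε := ρ))
    (hb.subset innerParallel_subset) isBounded_ball (by rw [hX, volume_real_ball _ hρ.le])
    (t := r / ρ) (by positivity)
  rw [hs, volume_real_ball _ hρ.le] at h
  have h2 := h.trans (measureReal_mono (innerParallel_add_ball hb) hb.measure_lt_top.ne)
  rw [hΩ, mul_left_comm, ← mul_pow] at h2
  have h3 := le_of_mul_le_mul_left h2 volume_real_unitBall_pos
  have e : (1 + r / ρ) * ρ = ρ + r := by field_simp
  rw [e] at h3
  exact le_of_pow_le_pow_left₀ d.succ_ne_zero hR h3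

/-- Writing `|Ω_r| = |B_ρ|`, the bound `ρ ≤ R - r` reduces the claim to one real variable. -/
lemma mul_volume_le (ho : IsOpen Ω) (hb : Bornology.IsBounded Ω) (hr : 0 ≤ r) {R : ℝ}
    (hR : 0 ≤ R)
    (hΩ : volume.real Ω = volume.real (ball (0 : Euc (d + 1)) 1) * R ^ (d + 1)) :
    r * volume.real (innerParallel Ω r) ≤ volume.real (ball (0 : Euc (d + 1)) 1) *
      (((d + 1 : ℕ) : ℝ) ^ (d + 1) * R ^ (d + 2) / (((d + 1 : ℕ) : ℝ) + 1) ^ (d + 2)) := by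
  have hκ := volume_real_unitBall_pos (d := d)
  obtain ⟨ρ, hρ, hX⟩ := exists_volume_eq_ball (innerParallel Ω r)
  rcases hr.eq_or_lt with rfl | hr
  · rw [zero_mul]; positivity
  rcases hρ.eq_or_lt with rfl | hρ
  · rw [hX, zero_pow d.succ_ne_zero, mul_zero, mul_zero]; positivity
  have h := radius_add_le ho hb hr hρ hR hX hΩ
  rw [hX, mul_left_comm]
  refine mul_le_mul_of_nonneg_left (le_trans ?_ (mul_pow_le_max d.succ_ne_zero hr.le
    (by linarith : r ≤ R))) hκ.le
  gcongr
  linarith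

/-- A bounded open set containing a ball of the same volume is that ball. -/
lemma eq_ball_of_volume_le (ho : IsOpen Ω) (hb : Bornology.IsBounded Ω) {R : ℝ} (hR : 0 < R)
    (h : ball x R ⊆ Ω) (hv : volume.real Ω ≤ volume.real (ball x R)) : Ω = ball x R := by
  have hnull : volume (Ω \ ball x R) = 0 := by
    have h1 := measureReal_sdiff h measurableSet_ball (μ := volume) hb.measure_lt_top.ne
    have h2 := measureReal_nonneg (μ := volume) (s := Ω \ ball x R)
    have h3 : volume.real (Ω \ ball x R) = 0 := by linarith
    exact (measureReal_eq_zero_iff (hb.subset sdiff_subset).measure_lt_top.ne).1 h3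
  have hemp : Ω \ closedBall x R = ∅ :=
    (ho.sdiff isClosed_closedBall).measure_eq_zero_iff volume |>.1
      (measure_mono_null (sdiff_subset_sdiff_right ball_subset_closedBall) hnull)
  refine Subset.antisymm ?_ h
  rw [← interior_closedBall x hR.ne']
  exact interior_maximal (sdiff_eq_empty.1 hemp) ho

/-- Equality forces `ρ = R - r`, that is, equality in Brunn–Minkowski for `Ω_r` and `B_r`. -/
lemma eq_ball_of_equality (hd : d ≠ 0) (ho : IsOpen Ω) (hb : Bornology.IsBounded Ω)
    (hc : Convex ℝ Ω) (hr : 0 ≤ r) {R : ℝ} (hR : 0 < R)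
    (hΩ : volume.real Ω = volume.real (ball (0 : Euc (d + 1)) 1) * R ^ (d + 1))
    (h : r * volume.real (innerParallel Ω r) = volume.real (ball (0 : Euc (d + 1)) 1) *
      (((d + 1 : ℕ) : ℝ) ^ (d + 1) * R ^ (d + 2) / (((d + 1 : ℕ) : ℝ) + 1) ^ (d + 2))) :
    ∃ x, Ω = ball x R := by
  have hκ := volume_real_unitBall_pos (d := d)
  have hpos : 0 < r * volume.real (innerParallel Ω r) := by rw [h]; positivity
  obtain ⟨ρ, hρ, hX⟩ := exists_volume_eq_ball (innerParallel Ω r)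
  have hr0 : 0 < r := hr.lt_of_ne fun e => by simp [← e] at hpos
  have hρ0 : 0 < ρ := hρ.lt_of_ne fun e => by simp [hX, ← e] at hpos
  have hle := radius_add_le ho hb hr0 hρ0 hR.le hX hΩ
  have hge : R - r ≤ ρ := by
    have hm := mul_le_mul_of_nonneg_left (mul_pow_le_max d.succ_ne_zero hr
      (by linarith : r ≤ R)) hκ.le
    rw [← h, hX, mul_left_comm] at hm
    exact le_of_pow_le_pow_left₀ d.succ_ne_zero hρ
      (le_of_mul_le_mul_left (le_of_mul_le_mul_left hm hr0) hκ)
  have hRe : R = ρ + r := by linarith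
  have hs : (r / ρ) • ball (0 : Euc (d + 1)) ρ = ball 0 r := by
    rw [_root_.smul_ball (by positivity), smul_zero, Real.norm_of_nonneg (by positivity),
      div_mul_cancel₀ _ hρ0.ne']
  obtain ⟨z, hz⟩ := exists_ball_subset hd (isOpen_innerParallel ho (r := r))
    (hb.subset innerParallel_subset) (convex_innerParallel ho hb hc) hρ0
    (t := r / ρ) (by positivity) (by rw [hX, volume_real_ball _ hρ]) (by
      rw [hs, volume_real_ball _ hρ]
      refine (measureReal_mono (innerParallel_add_ball hb) hb.measure_lt_top.ne).trans ?_
      have e : (1 + r / ρ) * ρ = R := by rw [hRe]; field_simp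
      rw [hΩ, mul_left_comm, ← mul_pow, e])
  refine ⟨z, eq_ball_of_volume_le ho hb hR ?_ ?_⟩
  · have := (add_subset_add_right hz (t := ball 0 r)).trans (innerParallel_add_ball hb)
    rwa [_root_.ball_add_ball hρ0 hr0, add_zero, ← hRe] at this
  · rw [hΩ, volume_real_ball _ hR.le]

lemma infDist_frontier_ball {ρ : ℝ} (hρ : 0 < ρ) {y : Euc (d + 1)} (hy : y ∈ ball x ρ) :
    infDist y (frontier (ball x ρ)) = ρ - dist y x := by
  refine le_antisymm ?_ (le_infDist_frontier isOpen_ball isBounded_ball hy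
    (ball_subset_ball' (by linarith)))
  rw [frontier_ball x hρ.ne']
  have hlt : dist y x < ρ := mem_ball.1 hy
  -- `x + ρ e` is the point of the sphere on the ray from `x` through `y`.
  obtain ⟨e, he, hye⟩ : ∃ e : Euc (d + 1), ‖e‖ = 1 ∧ y - x = dist y x • e := by
    rcases eq_or_ne y x with rfl | hne
    · exact ⟨EuclideanSpace.single 0 1, by simp, by simp⟩
    · have h0 : ‖y - x‖ ≠ 0 := norm_ne_zero_iff.2 (sub_ne_zero.2 hne)
      refine ⟨‖y - x‖⁻¹ • (y - x), by rw [norm_smul, norm_inv, norm_norm, inv_mul_cancel₀ h0], ?_⟩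
      rw [dist_eq_norm, smul_smul, mul_inv_cancel₀ h0, one_smul]
  have hmem : x + ρ • e ∈ sphere x ρ := by
    rw [mem_sphere_iff_norm, add_sub_cancel_left, norm_smul, he, mul_one,
      Real.norm_of_nonneg hρ.le]
  refine (infDist_le_dist_of_mem hmem).trans (le_of_eq ?_)
  have e1 : x + ρ • e - y = (ρ - dist y x) • e := by
    rw [sub_smul, ← hye]; abel
  rw [dist_comm, dist_eq_norm, e1, norm_smul, he, mul_one, Real.norm_of_nonneg]
  linarith

lemma innerParallel_ball {ρ : ℝ} (hρ : 0 < ρ) (hr : 0 ≤ r) :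
    innerParallel (ball x ρ) r = ball x (ρ - r) := by
  ext y
  constructor
  · rintro ⟨hy, hyr⟩
    rw [infDist_frontier_ball hρ hy] at hyr
    rw [mem_ball]; linarith
  · intro hy
    have hy' : y ∈ ball x ρ := ball_subset_ball (by linarith) hy
    refine ⟨hy', ?_⟩
    rw [infDist_frontier_ball hρ hy']
    linarith [mem_ball.1 hy]

lemma le_inradius_ball {ρ : ℝ} (hρ : 0 < ρ) : ρ ≤ inradius (ball x ρ) := by
  refine le_csSup ⟨ρ, ?_⟩ ⟨x, mem_ball_self hρ, ?_⟩
  · rintro _ ⟨y, hy, rfl⟩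
    show infDist y _ ≤ ρ
    rw [infDist_frontier_ball hρ hy]
    linarith [dist_nonneg (x := y) (y := x)]
  · show infDist x _ = ρ
    rw [infDist_frontier_ball hρ (mem_ball_self hρ), dist_self, sub_zero]

end parallel

end helpers

theorem stmt_7 (n : ℕ) (hn : 2 ≤ n) (Ω : Set (EuclideanSpace ℝ (Fin n)))
    (hΩo : IsOpen Ω) (hΩb : Bornology.IsBounded Ω) (hΩc : Convex ℝ Ω)
    (hΩne : Ω.Nonempty)
    (κ : ℝ) (hκ : κ = (volume (Metric.ball (0 : EuclideanSpace ℝ (Fin n)) 1)).toReal)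
    (R : ℝ) (hR : R = ((volume Ω).toReal / κ) ^ ((1 : ℝ) / n)) :
    (∀ r ∈ Set.Icc 0 (inradius Ω),
      r * (volume (innerParallel Ω r)).toReal ≤
        κ * n ^ n * R ^ (n + 1) / (n + 1) ^ (n + 1)) ∧
    ((∃ r ∈ Set.Icc 0 (inradius Ω),
        r * (volume (innerParallel Ω r)).toReal =
          κ * n ^ n * R ^ (n + 1) / (n + 1) ^ (n + 1)) ↔
      ∃ (x : EuclideanSpace ℝ (Fin n)) (ρ : ℝ), Ω = Metric.ball x ρ) := by
  obtain ⟨d, rfl⟩ : ∃ d, n = d + 1 := ⟨n - 1, by omega⟩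
  have hd : d ≠ 0 := by omega
  have hκ' : κ = volume.real (ball (0 : Euc (d + 1)) 1) := hκ
  have hκ0 : 0 < κ := hκ' ▸ volume_real_unitBall_pos
  have hΩ0 : 0 < (volume Ω).toReal :=
    ENNReal.toReal_pos (hΩo.measure_pos _ hΩne).ne' hΩb.measure_lt_top.ne
  have hR0 : 0 < R := by rw [hR]; positivity
  have hΩ : volume.real Ω = volume.real (ball (0 : Euc (d + 1)) 1) * R ^ (d + 1) := by
    rw [← hκ', hR, one_div, Real.rpow_inv_natCast_pow (by positivity) (by simp), measureReal_def]
    field_simp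
  rw [mul_assoc, mul_div_assoc, hκ']
  refine ⟨fun r hr => mul_volume_le hΩo hΩb hr.1 hR0.le hΩ, ?_, ?_⟩
  · rintro ⟨r, hr, h⟩
    obtain ⟨x, hx⟩ := eq_ball_of_equality hd hΩo hΩb hΩc hr.1 hR0 hΩ h
    exact ⟨x, R, hx⟩
  · rintro ⟨x, ρ, rfl⟩
    have hρ : 0 < ρ := nonempty_ball.1 hΩne
    have hρR : ρ = R := by
      rw [volume_real_ball _ hρ.le] at hΩ
      exact (pow_left_inj₀ hρ.le hR0.le d.succ_ne_zero).1
        (mul_left_cancel₀ volume_real_unitBall_pos.ne' hΩ)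
    have hle : ρ / ((d + 1 : ℕ) + 1) ≤ ρ := div_le_self hρ.le (by simp; positivity)
    -- For a ball of radius `ρ` the maximum is attained at `r = ρ / (n + 1)`.
    refine ⟨ρ / ((d + 1 : ℕ) + 1), ⟨by positivity, hle.trans (le_inradius_ball hρ)⟩, ?_⟩
    rw [innerParallel_ball hρ (by positivity), ← measureReal_def,
      volume_real_ball _ (by linarith), ← hρR]
    have e : ρ - ρ / ((d + 1 : ℕ) + 1) = (d + 1 : ℕ) * ρ / ((d + 1 : ℕ) + 1) := by
      field_simp; ring
    rw [e, div_pow, mul_pow, pow_succ ρ (d + 1), pow_succ (((d + 1 : ℕ) : ℝ) + 1) (d + 1)]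
    field_simp
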